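/- arXiv:0904.2040 — 3 statements merged into one kernel-verified Lean document; each statement's English description precedes it below -/
import Mathlib

section
/- Let w be a weight function on [-1,1], let π_0,…,π_{n-1} be the first n orthonormal polynomials for w, and let (λ_i, ν_i)_{i<n} be an n-point Gauss quadrature rule for w. Let A : ℝ → ℝ^{N×N} and b : ℝ → ℝ^N be such that A(λ_i) is invertible for each i < n, and set x(λ_i) = A(λ_i)⁻¹ b(λ_i). Then the degree-(n-1) pseudospectral approximation equals the degree-(n-1) collocation approximation: for every s ∈ ℝ, Σ_{k<n} (Σ_{i<n} ν_i x(λ_i) π_k(λ_i)) π_k(s) = Σ_{i<n} x(λ_i) ℓ_i(s), where ℓ_i(s) = Π_{j<n, j≠i} (s − λ_j)/(λ_i − λ_j) is the i-th Lagrange basis polynomial for the nodes λ_0,…,λ_{n-1}. -/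
open MeasureTheory Polynomial Matrix

/-!
The Gauss rule is exact on the products `π j * π k`, so orthonormality says `P * Q = 1` for the
square matrices `P k i = π k (lam i)` and `Q i k = ν i * π k (lam i)`. Then also `Q * P = 1`, and
this says that the polynomial `∑ k, ν i * π k (lam i) * π k` takes the value `1` at `lam i` and `0`
at the other nodes. Its degree is less than the number of nodes, so it is the `i`-th Lagrange basis
polynomial.
-/

lemma degree_mul_lt_of_lt {R : Type*} [Semiring R] {p q : R[X]} {m n : ℕ}
    (hp : p.degree < m) (hq : q.degree < n) : (p * q).degree < (m + n - 1 : ℕ) := by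
  refine (degree_mul_le p q).trans_lt ?_
  generalize p.degree = a at hp
  generalize q.degree = b at hq
  cases a with
  | bot => simp
  | coe a =>
    cases b with
    | bot => simp
    | coe b =>
      have ha : a < m := WithBot.coe_lt_coe.1 hp
      have hb : b < n := WithBot.coe_lt_coe.1 hq
      exact WithBot.coe_lt_coe.2 (show a + b < m + n - 1 by lia)

lemma eval_lagrangeBasis {F ι : Type*} [Field F] [DecidableEq ι] (t : Finset ι) (v : ι → F)
    (i : ι) (s : F) :
    (Lagrange.basis t v i).eval s = ∏ j ∈ t.erase i, (s - v j) / (v i - v j) := by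
  simp [Lagrange.basis, Lagrange.basisDivisor, eval_prod, div_eq_inv_mul]

/-- The family `π` is orthonormal for the pairing `(p, q) ↦ L (p * q)` of a functional `L` on
polynomials; `L p = ∫ p(s) w(s) ds` gives the orthonormal polynomials of the weight function `w`. -/
def IsOrthonormalFor {R κ : Type*} [Semiring R] [DecidableEq κ] (L : R[X] → R) (π : κ → R[X]) :
    Prop :=
  ∀ j k, L (π j * π k) = if j = k then 1 else 0

/-- The quadrature rule with nodes `lam` and weights `ν`, as a functional on polynomials. -/
noncomputable def quadrature {R ι : Type*} [Semiring R] [Fintype ι] (lam ν : ι → R)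
    (p : R[X]) : R :=
  ∑ i, ν i * p.eval (lam i)

/-- The pseudospectral approximation of data `x` given at the nodes `lam`: the expansion in the
family `π` whose coefficients are computed by the quadrature rule `(lam, ν)`. -/
noncomputable def pseudospectralApprox {R V ι κ : Type*} [Semiring R] [AddCommMonoid V] [Module R V]
    [Fintype ι] [Fintype κ] (lam ν : ι → R) (π : κ → R[X]) (x : ι → V) (s : R) : V :=
  ∑ k, (π k).eval s • ∑ i, (ν i * (π k).eval (lam i)) • x i

/-- The collocation approximation of data `x` given at the nodes `lam`: its Lagrange
interpolant. -/
noncomputable def collocationApprox {F V ι : Type*} [Field F] [AddCommMonoid V] [Module F V]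
    [Fintype ι] [DecidableEq ι] (lam : ι → F) (x : ι → V) (s : F) : V :=
  ∑ i, (Lagrange.basis Finset.univ lam i).eval s • x i

/-- The reproducing kernel `∑ k, ν i * π k (lam i) * π k` at the node `lam i`, scaled by the weight
`ν i`: the polynomial that multiplies `x i` in the pseudospectral approximation. -/
noncomputable def weightedKernel {R ι κ : Type*} [Semiring R] [Fintype κ] (lam ν : ι → R)
    (π : κ → R[X]) (i : ι) : R[X] :=
  ∑ k, (ν i * (π k).eval (lam i)) • π k

lemma IsOrthonormalFor.quadrature_of_exact {R ι κ : Type*} [CommSemiring R] [Fintype ι]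
    [DecidableEq κ] {L : R[X] → R} {lam ν : ι → R} {π : κ → R[X]} {n : ℕ}
    (hπ : IsOrthonormalFor L π) (hdeg : ∀ k, (π k).degree < n)
    (hexact : ∀ p : R[X], p.degree < (2 * n - 1 : ℕ) → L p = quadrature lam ν p) :
    IsOrthonormalFor (quadrature lam ν) π := fun j k ↦ by
  have hlt : (π j * π k).degree < (2 * n - 1 : ℕ) := by
    simpa only [two_mul] using degree_mul_lt_of_lt (hdeg j) (hdeg k)
  rw [← hexact _ hlt, hπ j k]

lemma pseudospectralApprox_eq_sum_weightedKernel {R V ι κ : Type*} [CommSemiring R]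
    [AddCommMonoid V] [Module R V] [Fintype ι] [Fintype κ] (lam ν : ι → R) (π : κ → R[X])
    (x : ι → V) (s : R) :
    pseudospectralApprox lam ν π x s = ∑ i, (weightedKernel lam ν π i).eval s • x i := by
  simp only [pseudospectralApprox, weightedKernel, Finset.smul_sum, smul_smul, eval_finsetSum,
    eval_smul, smul_eq_mul, Finset.sum_smul]
  rw [Finset.sum_comm]
  simp only [mul_comm]

lemma degree_weightedKernel_lt {R ι κ : Type*} [Semiring R] [Fintype κ] (lam ν : ι → R)
    {π : κ → R[X]} {n : ℕ} (hdeg : ∀ k, (π k).degree < n) (i : ι) :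
    (weightedKernel lam ν π i).degree < n :=
  mem_degreeLT.1 <| Submodule.sum_mem _ fun k _ ↦
    Submodule.smul_mem _ _ <| mem_degreeLT.2 <| hdeg k

section DiscreteOrthonormality

variable {R ι κ : Type*} [CommRing R] [Fintype ι] [Fintype κ] {lam ν : ι → R} {π : κ → R[X]}

lemma IsOrthonormalFor.eval_weightedKernel [DecidableEq ι] [DecidableEq κ]
    (hπ : IsOrthonormalFor (quadrature lam ν) π) (hcard : Fintype.card κ = Fintype.card ι)
    (i j : ι) : (weightedKernel lam ν π i).eval (lam j) = if i = j then 1 else 0 := by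
  let P : Matrix κ ι R := .of fun k i ↦ (π k).eval (lam i)
  let Q : Matrix ι κ R := .of fun i k ↦ ν i * (π k).eval (lam i)
  have hPQ : P * Q = 1 := by
    ext j k
    rw [one_apply, ← hπ j k]
    simp only [P, Q, mul_apply, of_apply, quadrature, eval_mul, mul_left_comm]
  have hQP : Q * P = 1 := (mul_eq_one_comm_of_card_eq _ _ _ hcard).1 hPQ
  rw [← one_apply, ← hQP]
  simp only [P, Q, weightedKernel, mul_apply, of_apply, eval_finsetSum, eval_smul, smul_eq_mul]

lemma IsOrthonormalFor.injective_nodes [Nontrivial R] [DecidableEq κ]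
    (hπ : IsOrthonormalFor (quadrature lam ν) π) (hcard : Fintype.card κ = Fintype.card ι) :
    Function.Injective lam := fun i j hij ↦ by
  classical
  by_contra hne
  have hi := hπ.eval_weightedKernel hcard i i
  have hj := hπ.eval_weightedKernel hcard i j
  rw [if_pos rfl] at hi
  rw [if_neg hne, ← hij, hi] at hj
  exact one_ne_zero hj

end DiscreteOrthonormality

lemma IsOrthonormalFor.weightedKernel_eq_lagrangeBasis {F ι κ : Type*} [Field F] [Fintype ι]
    [Fintype κ] [DecidableEq ι] [DecidableEq κ] {lam ν : ι → F} {π : κ → F[X]}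
    (hπ : IsOrthonormalFor (quadrature lam ν) π) (hcard : Fintype.card κ = Fintype.card ι)
    (hdeg : ∀ k, (π k).degree < Fintype.card ι) (i : ι) :
    weightedKernel lam ν π i = Lagrange.basis Finset.univ lam i := by
  have hinj : Set.InjOn lam (Finset.univ : Finset ι) := (hπ.injective_nodes hcard).injOn
  refine eq_of_degrees_lt_of_eval_index_eq Finset.univ hinj
    (degree_weightedKernel_lt lam ν hdeg i) ?_ fun j hj ↦ ?_
  · rw [Lagrange.degree_basis hinj (Finset.mem_univ i)]
    exact_mod_cast Nat.sub_one_lt (Finset.card_ne_zero_of_mem (Finset.mem_univ i))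
  · rw [hπ.eval_weightedKernel hcard i j]
    split_ifs with hij
    · rw [← hij, Lagrange.eval_basis_self hinj (Finset.mem_univ i)]
    · rw [Lagrange.eval_basis_of_ne hij hj]

-- The degree bound `2 * n - 1`, one less than for a Gauss rule, includes the Gauss–Radau rules.
theorem pseudospectral_eq_collocation_general {F V ι κ : Type*} [Field F] [AddCommMonoid V]
    [Module F V] [Fintype ι] [Fintype κ] [DecidableEq ι] [DecidableEq κ] {L : F[X] → F}
    {lam ν : ι → F} {π : κ → F[X]} (hcard : Fintype.card κ = Fintype.card ι)
    (hdeg : ∀ k, (π k).degree < Fintype.card ι) (hπ : IsOrthonormalFor L π)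
    (hexact : ∀ p : F[X], p.degree < (2 * Fintype.card ι - 1 : ℕ) → L p = quadrature lam ν p)
    (x : ι → V) (s : F) :
    pseudospectralApprox lam ν π x s = collocationApprox lam x s := by
  have hquad : IsOrthonormalFor (quadrature lam ν) π := hπ.quadrature_of_exact hdeg hexact
  simp only [pseudospectralApprox_eq_sum_weightedKernel, collocationApprox,
    hquad.weightedKernel_eq_lagrangeBasis hcard hdeg]

/-- **Pseudospectral equals collocation.**
Given a weight function `w` on `[-1,1]`, the first `n` orthonormal polynomials `π`,
and an `n`-point Gauss quadrature rule `(lam i, ν i)` for `w`, for a parameterized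
matrix equation `A(s) x(s) = b(s)` (with `A(lam i)` invertible), the degree-`(n-1)`
pseudospectral approximation coincides with the degree-`(n-1)` collocation
(Lagrange interpolation) approximation. -/
theorem pseudospectral_eq_collocation
    (n N : ℕ) (w : ℝ → ℝ)
    (hw_pos : ∀ s ∈ Set.Icc (-1 : ℝ) 1, 0 < w s)
    (hw_norm : (∫ s in (-1 : ℝ)..1, w s) = 1)
    (π : ℕ → Polynomial ℝ)
    (hπdeg : ∀ k, (π k).degree = (k : ℕ))
    (hπorth : ∀ j k : ℕ, (∫ s in (-1 : ℝ)..1, (π j).eval s * (π k).eval s * w s)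
      = if j = k then (1 : ℝ) else 0)
    (lam ν : Fin n → ℝ)
    (hlam_mem : ∀ i, lam i ∈ Set.Icc (-1 : ℝ) 1)
    (hlam_inj : Function.Injective lam)
    (hν_pos : ∀ i, 0 < ν i)
    (hexact : ∀ p : Polynomial ℝ, p.degree < (2 * n : ℕ) →
      (∫ s in (-1 : ℝ)..1, p.eval s * w s) = ∑ i, ν i * p.eval (lam i))
    (A : ℝ → Matrix (Fin N) (Fin N) ℝ) (b : ℝ → Fin N → ℝ)
    (hAinv : ∀ i, IsUnit (A (lam i)))
    (x : Fin n → Fin N → ℝ)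
    (hx : ∀ i, x i = (A (lam i))⁻¹ *ᵥ b (lam i)) :
    ∀ s : ℝ,
      (∑ k : Fin n, ((π (k : ℕ)).eval s) •
          (∑ i : Fin n, (ν i * (π (k : ℕ)).eval (lam i)) • x i))
        = ∑ i : Fin n,
            (∏ j ∈ Finset.univ.erase i, (s - lam j) / (lam i - lam j)) • x i := by
  intro s
  simpa only [pseudospectralApprox, collocationApprox, eval_lagrangeBasis] using
    pseudospectral_eq_collocation_general (L := fun p ↦ ∫ s in (-1 : ℝ)..1, p.eval s * w s)
      (π := fun k : Fin n ↦ π k) (by simp) (by simp [hπdeg])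
      (fun j k ↦ by simpa only [eval_mul, Fin.ext_iff] using hπorth j k)
      (fun p hp ↦ hexact p (hp.trans_le (Nat.cast_le.2 (by simp)))) x s
end

section
/- Let w be a weight function on [-1,1] and let (π_k)_{k≤n} be orthonormal polynomials for w satisfying the three-term recurrence β_{k+1}π_{k+1}(s) = (s−α_k)π_k(s) − β_kπ_{k−1}(s) with π_{−1}=0, π_0=1, β_k > 0, and let J_n be the associated n×n Jacobi matrix. Let (λ_i, ν_i)_{i<n} be an n-point Gauss quadrature rule for w whose nodes are zeros of π_n: π_n(λ_i) = 0 for all i < n. Then for every real polynomial p and all i, j < n, the (i,j) entry of the matrix p(J_n) (obtained by evaluating p at the matrix J_n) equals the Gauss quadrature approximation of ⟨p π_i π_j⟩: (p(J_n))_{ij} = Σ_{k<n} ν_k p(λ_k) π_i(λ_k) π_j(λ_k). -/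
open MeasureTheory Polynomial Matrix

/-- The `n × n` symmetric tridiagonal Jacobi matrix with diagonal entries
`α 0, …, α (n-1)` and off-diagonal entries `β 1, …, β (n-1)`. -/
def jacobiMatrix (α β : ℕ → ℝ) (n : ℕ) : Matrix (Fin n) (Fin n) ℝ :=
  Matrix.of fun i j =>
    if (i : ℕ) = (j : ℕ) then α (i : ℕ)
    else if (i : ℕ) + 1 = (j : ℕ) ∨ (j : ℕ) + 1 = (i : ℕ) then β (max (i : ℕ) (j : ℕ))
    else 0

/-!
Put `v k = (π 0 (lam k), …, π (n - 1) (lam k))`. Evaluated at a zero of `π n`, the three-term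
recurrence says `J *ᵥ v k = lam k • v k`. The rule integrates each `π i * π j` with `i, j < n`
exactly, so orthonormality becomes the resolution of the identity `∑ k, ν k • v k (v k)ᵀ = 1`.
Applying `p(J)` to it gives `p(J) = ∑ k, ν k p(lam k) • v k (v k)ᵀ`.
-/

section SpectralResolution

variable {R m ι : Type*} [CommRing R] [Fintype m] [DecidableEq m]

theorem aeval_mulVec_of_mulVec_eq_smul {A : Matrix m m R} {v : m → R} {t : R}
    (hv : A *ᵥ v = t • v) (p : R[X]) : aeval A p *ᵥ v = p.eval t • v := by
  rw [← toLinAlgEquiv'_apply, ← aeval_algHom_apply]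
  exact Module.End.aeval_apply_of_mem_apply_eq_smul hv

theorem aeval_eq_sum_smul_vecMulVec [Fintype ι] {A : Matrix m m R} {u v : ι → m → R} {t : ι → R}
    (hv : ∀ k, A *ᵥ v k = t k • v k) (hone : ∑ k, vecMulVec (v k) (u k) = 1) (p : R[X]) :
    aeval A p = ∑ k, p.eval (t k) • vecMulVec (v k) (u k) :=
  calc aeval A p = aeval A p * ∑ k, vecMulVec (v k) (u k) := by rw [hone, mul_one]
    _ = ∑ k, p.eval (t k) • vecMulVec (v k) (u k) := by
      simp only [Finset.mul_sum, mul_vecMulVec, aeval_mulVec_of_mulVec_eq_smul (hv _),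
        smul_vecMulVec]

end SpectralResolution

section JacobiMatrix

variable {n : ℕ} {α β : ℕ → ℝ}

theorem jacobiMatrix_apply_eq_add (i j : Fin n) :
    jacobiMatrix α β n i j = (if (j : ℕ) = i then α i else 0)
      + (if (j : ℕ) = i + 1 then β (i + 1) else 0) + (if (j : ℕ) + 1 = i then β i else 0) := by
  rw [jacobiMatrix, of_apply]
  grind

theorem jacobiMatrix_mulVec_apply (f : ℕ → ℝ) (i : Fin n) :
    (jacobiMatrix α β n *ᵥ fun j => f j) i = α i * f i
      + (if (i : ℕ) + 1 < n then β (i + 1) * f (i + 1) else 0)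
      + β i * (if (i : ℕ) = 0 then 0 else f (i - 1)) := by
  obtain ⟨i, hi⟩ := i
  have sum_pred : ∑ j ∈ Finset.range n, (if j + 1 = i then β i * f j else 0)
      = β i * (if i = 0 then 0 else f (i - 1)) := by
    cases i with
    | zero => simp
    | succ i => simp [Nat.lt_of_succ_lt hi]
  simp only [mulVec, dotProduct, jacobiMatrix_apply_eq_add, add_mul, ite_mul, zero_mul,
    Finset.sum_add_distrib]
  rw [Fin.sum_univ_eq_sum_range fun j => if j = i then α i * f j else 0,
    Fin.sum_univ_eq_sum_range fun j => if j = i + 1 then β (i + 1) * f j else 0,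
    Fin.sum_univ_eq_sum_range fun j => if j + 1 = i then β i * f j else 0, sum_pred]
  simp [hi]

theorem jacobiMatrix_mulVec_eq_smul {f : ℕ → ℝ} {t : ℝ}
    (hrec : ∀ k < n, β (k + 1) * f (k + 1)
      = (t - α k) * f k - β k * (if k = 0 then 0 else f (k - 1)))
    (hzero : f n = 0) :
    (jacobiMatrix α β n *ᵥ fun i => f i) = t • fun i : Fin n => f i := by
  ext i
  have boundary : (if (i : ℕ) + 1 < n then β (i + 1) * f (i + 1) else 0)
      = β (i + 1) * f (i + 1) := by
    split_ifs with h
    · rfl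
    · rw [show (i : ℕ) + 1 = n by lia, hzero, mul_zero]
  rw [jacobiMatrix_mulVec_apply, boundary, hrec i i.isLt, Pi.smul_apply, smul_eq_mul]
  ring

end JacobiMatrix

theorem sum_weight_mul_eval_mul_eval_eq_ite {R ι : Type*} [CommSemiring R] [Fintype ι] {n : ℕ}
    {L : R[X] → R} {π : ℕ → R[X]} {lam ν : ι → R}
    (hdeg : ∀ k < n, (π k).degree ≤ k)
    (horth : ∀ j < n, ∀ k < n, L (π j * π k) = if j = k then 1 else 0)
    (hexact : ∀ p : R[X], p.degree < (2 * n : ℕ) → L p = ∑ k, ν k * p.eval (lam k))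
    (i j : Fin n) :
    ∑ k, ν k * ((π i).eval (lam k) * (π j).eval (lam k)) = if i = j then 1 else 0 := by
  have hdeg_mul : (π i * π j).degree < (2 * n : ℕ) :=
    calc (π i * π j).degree ≤ ((i : ℕ) : WithBot ℕ) + (j : ℕ) :=
          degree_mul_le_of_le (hdeg i i.isLt) (hdeg j j.isLt)
      _ < (2 * n : ℕ) := by exact_mod_cast (by lia : (i : ℕ) + j < 2 * n)
  simpa only [eval_mul, Fin.ext_iff, horth i i.isLt j j.isLt] using (hexact _ hdeg_mul).symm

theorem aeval_jacobiMatrix_entry_eq_quadrature_general {ι : Type*} [Fintype ι] {n : ℕ}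
    {π : ℕ → ℝ[X]} {α β : ℕ → ℝ} {lam ν : ι → ℝ}
    (hrec : ∀ k < n, ∀ s : ℝ, β (k + 1) * (π (k + 1)).eval s
      = (s - α k) * (π k).eval s - β k * (if k = 0 then 0 else (π (k - 1)).eval s))
    (hzeros : ∀ k, (π n).eval (lam k) = 0)
    (horth : ∀ i j : Fin n,
      ∑ k, ν k * ((π i).eval (lam k) * (π j).eval (lam k)) = if i = j then 1 else 0)
    (p : ℝ[X]) (i j : Fin n) :
    aeval (jacobiMatrix α β n) p i j
      = ∑ k, ν k * p.eval (lam k) * (π i).eval (lam k) * (π j).eval (lam k) := by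
  let v (k : ι) (i : Fin n) : ℝ := (π i).eval (lam k)
  have eigenvector (k : ι) : jacobiMatrix α β n *ᵥ v k = lam k • v k :=
    jacobiMatrix_mulVec_eq_smul (f := fun i => (π i).eval (lam k))
      (fun i hi => hrec i hi (lam k)) (hzeros k)
  have resolution : ∑ k, vecMulVec (v k) (ν k • v k) = 1 := by
    ext i j
    simp only [Matrix.sum_apply, vecMulVec_apply, Pi.smul_apply, smul_eq_mul, one_apply,
      ← horth i j]
    exact Finset.sum_congr rfl fun k _ => mul_left_comm _ _ _
  rw [aeval_eq_sum_smul_vecMulVec eigenvector resolution p, Matrix.sum_apply]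
  refine Finset.sum_congr rfl fun k _ => ?_
  simp only [Matrix.smul_apply, vecMulVec_apply, Pi.smul_apply, smul_eq_mul, v]
  ring

/-- **Polynomials of the Jacobi matrix give Gauss quadrature approximations.**
For orthonormal polynomials `π` for a weight `w` on `[-1,1]` with three-term
recurrence coefficients `α`, `β` and Jacobi matrix `J n`, and for an `n`-point
Gauss quadrature rule whose nodes are the zeros of `π n`, the `(i,j)` entry of
`p (J n)` (polynomial evaluation at the matrix) equals the Gauss quadrature
approximation of `⟨p * π i * π j⟩`. -/
theorem aeval_jacobiMatrix_entry_eq_quadrature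
    (n : ℕ) (w : ℝ → ℝ)
    (hw_pos : ∀ s ∈ Set.Icc (-1 : ℝ) 1, 0 < w s)
    (hw_norm : (∫ s in (-1 : ℝ)..1, w s) = 1)
    (π : ℕ → Polynomial ℝ)
    (hπ0 : π 0 = 1)
    (hπdeg : ∀ k, (π k).degree = (k : ℕ))
    (hπorth : ∀ j k : ℕ, (∫ s in (-1 : ℝ)..1, (π j).eval s * (π k).eval s * w s)
      = if j = k then (1 : ℝ) else 0)
    (α β : ℕ → ℝ) (hβ : ∀ k : ℕ, 0 < β (k + 1))
    (hrec : ∀ (k : ℕ) (s : ℝ), β (k + 1) * (π (k + 1)).eval s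
      = (s - α k) * (π k).eval s - β k * (if k = 0 then 0 else (π (k - 1)).eval s))
    (lam ν : Fin n → ℝ)
    (hlam_mem : ∀ i, lam i ∈ Set.Icc (-1 : ℝ) 1)
    (hlam_inj : Function.Injective lam)
    (hν_pos : ∀ i, 0 < ν i)
    (hexact : ∀ p : Polynomial ℝ, p.degree < (2 * n : ℕ) →
      (∫ s in (-1 : ℝ)..1, p.eval s * w s) = ∑ i, ν i * p.eval (lam i))
    (hzeros : ∀ i, (π n).eval (lam i) = 0) :
    ∀ (p : Polynomial ℝ) (i j : Fin n),
      (Polynomial.aeval (jacobiMatrix α β n) p) i j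
        = ∑ k : Fin n, ν k * p.eval (lam k) *
            (π (i : ℕ)).eval (lam k) * (π (j : ℕ)).eval (lam k) :=
  aeval_jacobiMatrix_entry_eq_quadrature_general (fun k _ => hrec k) hzeros <|
    sum_weight_mul_eval_mul_eval_eq_ite (fun k _ => (hπdeg k).le)
      (fun j _ k _ => by simpa only [eval_mul] using hπorth j k) hexact
end

section
/- Let w be a weight function on [-1,1], let π_0,…,π_{n-1} be the first n orthonormal polynomials for w, and let (λ_i, ν_i)_{i<n} be an n-point Gauss quadrature rule for w. Let A : ℝ → ℝ^{N×N} and b : ℝ → ℝ^N with A(λ_i) invertible for each i < n, set x(λ_i) = A(λ_i)⁻¹ b(λ_i), and let X_p be the N×n pseudospectral coefficient matrix with columns X_p(:,k) = Σ_{i<n} ν_i x(λ_i) π_k(λ_i). Then X_p solves the Galerkin system with all integrals replaced by the n-point Gauss quadrature rule: for every j < n, Σ_{k<n} (Σ_{i<n} ν_i π_j(λ_i) π_k(λ_i) A(λ_i)) · X_p(:,k) = Σ_{i<n} ν_i π_j(λ_i) b(λ_i). -/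
open MeasureTheory Polynomial Matrix

/-! Exactness up to degree `2n - 1` transfers orthonormality from the integral to the quadrature
sum, so the `n × n` matrix with entries `π_k(λ_i)` has a one-sided, hence two-sided, inverse with
entries `ν_i π_k(λ_i)`. Read on the other side, this says that the pseudospectral expansion
interpolates `x` at every node. The discretized Galerkin residual is a weighted sum of the
residuals `A(λ_i) x(λ_i) - b(λ_i)`, all of which vanish. -/

theorem degree_mul_lt_of_degree_lt {S : Type*} [Semiring S] {p q : S[X]} {m n : ℕ}
    (hp : p.degree < m) (hq : q.degree < n) : (p * q).degree < (m + n : ℕ) := by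
  obtain rfl | hp₀ := eq_or_ne p 0
  · simp
  calc (p * q).degree ≤ p.degree + q.degree := degree_mul_le p q
    _ < m + n := WithBot.add_lt_add_of_le_of_lt (degree_ne_bot.mpr hp₀) hp.le hq
    _ = (m + n : ℕ) := (Nat.cast_add m n).symm

theorem mulVec_inv_mulVec {m S : Type*} [Fintype m] [DecidableEq m] [CommRing S]
    {A : Matrix m m S} (hA : IsUnit A) (b : m → S) : A *ᵥ (A⁻¹ *ᵥ b) = b := by
  rw [mulVec_mulVec, mul_nonsing_inv A ((isUnit_iff_isUnit_det A).mp hA), one_mulVec]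

section QuadratureGalerkin

variable {ι κ R M M' : Type*} [Fintype ι] [CommSemiring R]
  [AddCommMonoid M] [Module R M] [AddCommMonoid M'] [Module R M']

/-- Discrete orthonormality of a family `P` of functions on a finite set of nodes, with respect to
the bilinear form of the quadrature weights `ν`. The nodes enter only through their indices, so
`P k i` stands for `π_k(λ_i)`. -/
def IsDiscreteOrthonormal [DecidableEq κ] (ν : ι → R) (P : κ → ι → R) : Prop :=
  ∀ j k, ∑ i, ν i * P j i * P k i = if j = k then 1 else 0

/-- The pseudospectral coefficients of `x`: the quadrature approximation of the inner products of
`x` with the basis functions `P k`. Both `x` and `P k` are given by their values at the nodes. -/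
def pseudospectralCoeff (ν : ι → R) (P : κ → ι → R) (x : ι → M) (k : κ) : M :=
  ∑ i, (ν i * P k i) • x i

theorem isDiscreteOrthonormal_of_exact [DecidableEq κ] {avg : (R → R) → R} {π : κ → R[X]}
    {n : ℕ} {ν lam : ι → R} (hdeg : ∀ k, (π k).degree < n)
    (horth : ∀ j k, avg (fun s => (π j).eval s * (π k).eval s) = if j = k then 1 else 0)
    (hexact : ∀ p : R[X], p.degree < (2 * n : ℕ) →
      avg (fun s => p.eval s) = ∑ i, ν i * p.eval (lam i)) :
    IsDiscreteOrthonormal ν fun k i => (π k).eval (lam i) := by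
  intro j k
  have hdeg_mul : (π j * π k).degree < (2 * n : ℕ) :=
    two_mul n ▸ degree_mul_lt_of_degree_lt (hdeg j) (hdeg k)
  simpa only [eval_mul, horth, ← mul_assoc] using (hexact _ hdeg_mul).symm

namespace IsDiscreteOrthonormal

variable [Fintype κ] [DecidableEq κ] {ν : ι → R} {P : κ → ι → R}

theorem sum_mul_mul_eq_ite [DecidableEq ι] (hP : IsDiscreteOrthonormal ν P)
    (hcard : Fintype.card κ = Fintype.card ι) (i i' : ι) :
    ∑ k, ν i * P k i * P k i' = if i = i' then 1 else 0 := by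
  have hleft : Matrix.of P * Matrix.of (fun i k => ν i * P k i) = 1 := by
    ext j k
    simpa only [mul_apply, of_apply, one_apply, mul_left_comm, mul_assoc] using hP j k
  have hright : Matrix.of (fun i k => ν i * P k i) * Matrix.of P = 1 :=
    (mul_eq_one_comm_of_card_eq κ ι R hcard).mp hleft
  simpa only [mul_apply, of_apply, one_apply] using congr_fun₂ hright i i'

theorem sum_smul_pseudospectralCoeff (hP : IsDiscreteOrthonormal ν P)
    (hcard : Fintype.card κ = Fintype.card ι) (x : ι → M) (i : ι) :
    ∑ k, P k i • pseudospectralCoeff ν P x k = x i := by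
  classical
  calc ∑ k, P k i • pseudospectralCoeff ν P x k
      = ∑ i', (∑ k, ν i' * P k i' * P k i) • x i' := by
        simp only [pseudospectralCoeff, Finset.smul_sum, Finset.sum_smul, smul_smul, mul_comm]
        exact Finset.sum_comm
    _ = x i := by simp [hP.sum_mul_mul_eq_ite hcard]

theorem sum_galerkin_apply_pseudospectralCoeff (hP : IsDiscreteOrthonormal ν P)
    (hcard : Fintype.card κ = Fintype.card ι) (A : ι → M →ₗ[R] M') (x : ι → M) (j : κ) :
    ∑ k, (∑ i, (ν i * P j i * P k i) • A i) (pseudospectralCoeff ν P x k) =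
      ∑ i, (ν i * P j i) • A i (x i) :=
  calc ∑ k, (∑ i, (ν i * P j i * P k i) • A i) (pseudospectralCoeff ν P x k)
      = ∑ i, (ν i * P j i) • A i (∑ k, P k i • pseudospectralCoeff ν P x k) := by
        simp only [LinearMap.sum_apply, LinearMap.smul_apply, map_sum, map_smul, Finset.smul_sum,
          smul_smul]
        exact Finset.sum_comm
    _ = ∑ i, (ν i * P j i) • A i (x i) := by
        simp only [hP.sum_smul_pseudospectralCoeff hcard]

end IsDiscreteOrthonormal

theorem pseudospectral_solves_quadrature_galerkin_general {l m : Type*} [Fintype m]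
    [Fintype κ] [DecidableEq κ] {ν : ι → R} {P : κ → ι → R} (hP : IsDiscreteOrthonormal ν P)
    (hcard : Fintype.card κ = Fintype.card ι) {A : ι → Matrix l m R} {b : ι → l → R}
    {x : ι → m → R} (hx : ∀ i, A i *ᵥ x i = b i) {X : Matrix m κ R}
    (hX : ∀ a k, X a k = ∑ i, ν i * x i a * P k i) (j : κ) :
    ∑ k, (∑ i, (ν i * P j i * P k i) • A i) *ᵥ (fun a => X a k) =
      ∑ i, (ν i * P j i) • b i := by
  have hcoeff (k : κ) : (fun a => X a k) = pseudospectralCoeff ν P x k := by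
    ext a
    simp only [hX, pseudospectralCoeff, Finset.sum_apply, Pi.smul_apply, smul_eq_mul,
      mul_right_comm]
  simpa only [hcoeff, ← hx, sum_mulVec, smul_mulVec, LinearMap.sum_apply, LinearMap.smul_apply,
    mulVecLin_apply] using
    hP.sum_galerkin_apply_pseudospectralCoeff hcard (fun i => (A i).mulVecLin) x j

end QuadratureGalerkin

/-- **The pseudospectral solution solves the quadrature-approximated Galerkin system.**
With `w` a weight function on `[-1,1]`, `π` the orthonormal polynomials for `w`, and
`(lam i, ν i)` an `n`-point Gauss quadrature rule for `w`, the matrix `Xp` of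
pseudospectral coefficients `Xp(:,k) = ∑ i, ν i • x(lam i) * π k (lam i)` (where
`x(lam i) = A(lam i)⁻¹ b(lam i)`) solves the Galerkin system in which every integral
is replaced by the `n`-point Gauss quadrature rule. -/
theorem pseudospectral_solves_quadrature_galerkin
    (n N : ℕ) (w : ℝ → ℝ)
    (hw_pos : ∀ s ∈ Set.Icc (-1 : ℝ) 1, 0 < w s)
    (hw_norm : (∫ s in (-1 : ℝ)..1, w s) = 1)
    (π : ℕ → Polynomial ℝ)
    (hπdeg : ∀ k, (π k).degree = (k : ℕ))
    (hπorth : ∀ j k : ℕ, (∫ s in (-1 : ℝ)..1, (π j).eval s * (π k).eval s * w s)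
      = if j = k then (1 : ℝ) else 0)
    (lam ν : Fin n → ℝ)
    (hlam_mem : ∀ i, lam i ∈ Set.Icc (-1 : ℝ) 1)
    (hlam_inj : Function.Injective lam)
    (hν_pos : ∀ i, 0 < ν i)
    (hexact : ∀ p : Polynomial ℝ, p.degree < (2 * n : ℕ) →
      (∫ s in (-1 : ℝ)..1, p.eval s * w s) = ∑ i, ν i * p.eval (lam i))
    (A : ℝ → Matrix (Fin N) (Fin N) ℝ) (b : ℝ → Fin N → ℝ)
    (hAinv : ∀ i, IsUnit (A (lam i)))
    (Xp : Matrix (Fin N) (Fin n) ℝ)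
    (hXp : ∀ (l : Fin N) (k : Fin n),
      Xp l k = ∑ i : Fin n,
        ν i * ((A (lam i))⁻¹ *ᵥ b (lam i)) l * (π (k : ℕ)).eval (lam i)) :
    ∀ j : Fin n,
      (∑ k : Fin n,
        (∑ i : Fin n, (ν i * (π (j : ℕ)).eval (lam i) * (π (k : ℕ)).eval (lam i)) • A (lam i))
          *ᵥ (fun l => Xp l k))
      = ∑ i : Fin n, (ν i * (π (j : ℕ)).eval (lam i)) • b (lam i) := by
  have hP : IsDiscreteOrthonormal ν fun (k : Fin n) i => (π k).eval (lam i) :=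
    isDiscreteOrthonormal_of_exact (avg := fun f => ∫ s in (-1 : ℝ)..1, f s * w s)
      (fun k => by simp [hπdeg]) (fun j k => by simpa only [Fin.ext_iff] using hπorth j k) hexact
  exact pseudospectral_solves_quadrature_galerkin_general hP rfl
    (fun i => mulVec_inv_mulVec (hAinv i) (b (lam i))) hXp
end
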